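/- arXiv:2208.13223 — 9 statements merged into one kernel-verified Lean document; each statement's English description precedes it below -/
import Mathlib

section
/- Every eigenvalue of the perturbed Laplacian L_B = L + diag(δ) has strictly positive real part; moreover, the eigenvalue λ₁(L_B) of L_B with smallest real part is a simple real eigenvalue, and a corresponding eigenvector can be chosen to be entrywise positive. -/
open Matrix Polynomial

/-- The weighted digraph of `W` is strongly connected: every node is connected to every
other node by a directed path along entries with `W a b > 0` (an edge `(a, b)` means that
`b` is an in-neighbor of `a`). -/
def StronglyConnected {n : ℕ} (W : Matrix (Fin n) (Fin n) ℝ) : Prop :=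
  ∀ i j : Fin n, Relation.ReflTransGen (fun a b => 0 < W a b) i j

/-- The in-degree matrix `D = diag(d₁, …, d_n)` with `d_i = ∑ j, w_ij`. -/
def degMat {n : ℕ} (W : Matrix (Fin n) (Fin n) ℝ) : Matrix (Fin n) (Fin n) ℝ :=
  Matrix.diagonal fun i => ∑ j, W i j

/-- The perturbed Laplacian `L_B = (D - W) + diag(δ)`. -/
def lapB {n : ℕ} (W : Matrix (Fin n) (Fin n) ℝ) (δ : Fin n → ℝ) :
    Matrix (Fin n) (Fin n) ℝ :=
  degMat W - W + Matrix.diagonal δ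

/-- `μ : ℂ` is an eigenvalue of the real matrix `M`, i.e. a root of its
characteristic polynomial over `ℂ`. -/
def IsEigenvalue {n : ℕ} (M : Matrix (Fin n) (Fin n) ℝ) (μ : ℂ) : Prop :=
  ((M.map (algebraMap ℝ ℂ)).charpoly).IsRoot μ

section PerronAux
variable {ι : Type*} [Fintype ι] [DecidableEq ι]

lemma aux_pos_mulVec (P : Matrix ι ι ℝ) (hP : ∀ i j, 0 < P i j) (x : ι → ℝ)
    (hx : ∀ i, 0 ≤ x i) (hne : x ≠ 0) (i : ι) : 0 < (P *ᵥ x) i := by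
  obtain ⟨j, hj⟩ := Function.ne_iff.1 hne
  exact Finset.sum_pos' (fun k _ => mul_nonneg (hP i k).le (hx k))
    ⟨j, Finset.mem_univ _, mul_pos (hP i j) (lt_of_le_of_ne (hx j) (Ne.symm hj))⟩

lemma aux_pow_mulVec (A : Matrix ι ι ℝ) (r : ℝ) (x : ι → ℝ) (h : A *ᵥ x = r • x) (M : ℕ) :
    (A ^ M) *ᵥ x = r ^ M • x := by
  induction M with
  | zero => simp
  | succ k ih => rw [pow_succ, ← Matrix.mulVec_mulVec, h, Matrix.mulVec_smul, ih, smul_smul]; ring_nf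

lemma aux_perron [Nonempty ι] (A : Matrix ι ι ℝ) (hA : ∀ i j, 0 ≤ A i j) (M : ℕ)
    (hM : ∀ i j, 0 < (A ^ M) i j) :
    ∃ (r : ℝ) (v : ι → ℝ), (∀ i, 0 < v i) ∧ A *ᵥ v = r • v := by
  classical
  let S : Set ((ι → ℝ) × ℝ) := {p | p.1 ∈ stdSimplex ℝ ι ∧ 0 ≤ p.2 ∧
    ∀ i, p.2 * p.1 i ≤ (A *ᵥ p.1) i}
  have hc : IsCompact S := by
    have hK : IsCompact ((stdSimplex ℝ ι) ×ˢ (Set.Icc (0:ℝ) (∑ i, ∑ j, A i j))) :=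
      (isCompact_stdSimplex ℝ ι).prod isCompact_Icc
    refine hK.of_isClosed_subset ?_ ?_
    · refine IsClosed.inter ((isClosed_stdSimplex ℝ ι).preimage continuous_fst) ?_
      refine IsClosed.inter (isClosed_le continuous_const continuous_snd) ?_
      have : {p : (ι → ℝ) × ℝ | ∀ i, p.2 * p.1 i ≤ (A *ᵥ p.1) i} =
        ⋂ i, {p : (ι → ℝ) × ℝ | p.2 * p.1 i ≤ (A *ᵥ p.1) i} := by ext; simp
      change IsClosed {p : (ι → ℝ) × ℝ | ∀ i, p.2 * p.1 i ≤ (A *ᵥ p.1) i}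
      rw [this]
      refine isClosed_iInter fun i => isClosed_le (by fun_prop) ?_
      simp only [Matrix.mulVec, dotProduct]
      fun_prop
    · rintro ⟨x, t⟩ ⟨hx, ht, h⟩
      refine ⟨hx, ht, ?_⟩
      simp only at hx ht h ⊢
      calc t = ∑ i, t * x i := by rw [← Finset.mul_sum, hx.2, mul_one]
        _ ≤ ∑ i, (A *ᵥ x) i := Finset.sum_le_sum fun i _ => h i
        _ ≤ _ := by
          refine Finset.sum_le_sum fun i _ => Finset.sum_le_sum fun j _ => ?_
          have : x j ≤ 1 := by
            rw [← hx.2]; exact Finset.single_le_sum (fun k _ => hx.1 k) (Finset.mem_univ j)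
          exact mul_le_of_le_one_right (hA i j) this
  have hne : S.Nonempty := by
    obtain ⟨i⟩ := ‹Nonempty ι›
    refine ⟨(Pi.single i 1, 0), single_mem_stdSimplex ℝ i, le_rfl, fun k => ?_⟩
    simp [hA]
  obtain ⟨⟨x, r⟩, ⟨hx, hr, h⟩, hmax⟩ := hc.exists_isMaxOn hne continuous_snd.continuousOn
  simp only at hx hr h
  have hx0 : x ≠ 0 := by
    rintro rfl
    have := hx.2
    simp at this
  have hz := aux_pos_mulVec _ hM x hx.1 hx0
  set z := (A ^ M) *ᵥ x with hzdef
  have heq : A *ᵥ x = r • x := by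
    by_contra hcon
    have hy : A *ᵥ x - r • x ≠ 0 := sub_ne_zero.2 hcon
    have hPy := aux_pos_mulVec _ hM (A *ᵥ x - r • x) (fun i => by simpa using h i) hy
    have hPy' : (A ^ M) *ᵥ (A *ᵥ x - r • x) = A *ᵥ z - r • z := by
      rw [Matrix.mulVec_sub, Matrix.mulVec_smul, hzdef, Matrix.mulVec_mulVec, Matrix.mulVec_mulVec,
        ← pow_succ, ← pow_succ']
    rw [hPy'] at hPy
    obtain ⟨i0, hi0⟩ := Finite.exists_min (fun i => (A *ᵥ z - r • z) i / z i)
    set ε := (A *ᵥ z - r • z) i0 / z i0 with hε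
    have hεpos : 0 < ε := div_pos (hPy i0) (hz i0)
    have hs : 0 < ∑ i, z i := Finset.sum_pos (fun i _ => hz i) Finset.univ_nonempty
    have hmem : ((∑ i, z i)⁻¹ • z, r + ε) ∈ S := by
      refine ⟨⟨fun i => ?_, ?_⟩, by positivity, fun i => ?_⟩
      · exact mul_nonneg (inv_nonneg.2 hs.le) (hz i).le
      · simp only [Pi.smul_apply, smul_eq_mul, ← Finset.mul_sum]
        exact inv_mul_cancel₀ hs.ne'
      · simp only [Matrix.mulVec_smul, Pi.smul_apply, smul_eq_mul]
        have h1 := (le_div_iff₀ (hz i)).1 (hi0 i)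
        simp only [Pi.sub_apply, Pi.smul_apply, smul_eq_mul] at h1
        have h2 : (r + ε) * z i ≤ (A *ᵥ z) i := by linarith
        have := mul_le_mul_of_nonneg_left h2 (inv_nonneg.2 hs.le)
        linarith
    have := hmax hmem
    simp at this
    linarith
  refine ⟨r, x, fun i => lt_of_le_of_ne (hx.1 i) fun h0 => ?_, heq⟩
  have h1 := hz i
  rw [hzdef, aux_pow_mulVec A r x heq M] at h1
  simp [← h0] at h1

lemma aux_unique [Nonempty ι] (A : Matrix ι ι ℝ) (M : ℕ)
    (hM : ∀ i j, 0 < (A ^ M) i j) (r : ℝ) (v : ι → ℝ) (hv : ∀ i, 0 < v i)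
    (hAv : A *ᵥ v = r • v) (w : ι → ℝ) (hw : A *ᵥ w = r • w) : ∃ t : ℝ, w = t • v := by
  obtain ⟨i0, hi0⟩ := Finite.exists_min (fun i => w i / v i)
  refine ⟨w i0 / v i0, ?_⟩
  by_contra hcon
  set t := w i0 / v i0
  have h := aux_pos_mulVec _ hM (w - t • v) (fun i => by
    have := (le_div_iff₀ (hv i)).1 (hi0 i)
    simpa using this) (sub_ne_zero.2 hcon) i0
  rw [aux_pow_mulVec A r (w - t • v) (by
    rw [Matrix.mulVec_sub, Matrix.mulVec_smul, hw, hAv, smul_sub, smul_comm]) M] at h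
  have : t * v i0 = w i0 := div_mul_cancel₀ _ (hv i0).ne'
  simp [this] at h

lemma aux_primitive (A : Matrix ι ι ℝ) (hA : ∀ i j, 0 ≤ A i j) (hd : ∀ i, 0 < A i i)
    (hc : ∀ i j, Relation.ReflTransGen (fun a b => 0 < A a b) i j) :
    ∃ M : ℕ, ∀ i j, 0 < (A ^ M) i j := by
  have hnn : ∀ k i j, 0 ≤ (A ^ k) i j := by
    intro k
    induction k with
    | zero => intro i j; simp [Matrix.one_apply]; split_ifs <;> norm_num
    | succ k ih =>
      intro i j
      rw [pow_succ, Matrix.mul_apply]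
      exact Finset.sum_nonneg fun l _ => mul_nonneg (ih i l) (hA l j)
  have hstep : ∀ k i j l, 0 < (A ^ k) i j → 0 < A j l → 0 < (A ^ (k+1)) i l := by
    intro k i j l h1 h2
    rw [pow_succ, Matrix.mul_apply]
    exact Finset.sum_pos' (fun m _ => mul_nonneg (hnn k i m) (hA m l))
      ⟨j, Finset.mem_univ _, mul_pos h1 h2⟩
  have hex : ∀ i j, ∃ k, 0 < (A ^ k) i j := by
    intro i j
    induction hc i j with
    | refl => exact ⟨0, by simp⟩
    | tail _ h ih => obtain ⟨k, hk⟩ := ih; exact ⟨k+1, hstep _ _ _ _ hk h⟩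
  choose f hf using hex
  refine ⟨∑ i, ∑ j, f i j, fun i j => ?_⟩
  have hle : f i j ≤ ∑ i, ∑ j, f i j :=
    (Finset.single_le_sum (f := fun j => f i j) (fun _ _ => Nat.zero_le _) (Finset.mem_univ j)).trans
      (Finset.single_le_sum (f := fun i => ∑ j, f i j) (fun _ _ => Nat.zero_le _) (Finset.mem_univ i))
  exact Nat.le_induction (P := fun k _ => 0 < (A ^ k) i j) (hf i j)
    (fun k _ hk => hstep k i j j hk (hd j)) _ hle

end PerronAux

/-- Every eigenvalue of the perturbed Laplacian `L_B = L + diag(δ)` has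
strictly positive real part; moreover the eigenvalue of smallest real part is a simple
real eigenvalue `λ₁`, and a corresponding eigenvector can be chosen entrywise positive. -/
theorem perturbedLaplacian_eigenvalues_pos_and_perron
    {n : ℕ} (W : Matrix (Fin n) (Fin n) ℝ)
    (hWnonneg : ∀ i j, 0 ≤ W i j)
    (hconn : StronglyConnected W)
    (δ : Fin n → ℝ) (hδnonneg : ∀ i, 0 ≤ δ i) (hδne : δ ≠ 0) :
    (∀ μ : ℂ, IsEigenvalue (lapB W δ) μ → 0 < μ.re) ∧
    ∃ lam1 : ℝ,
      IsEigenvalue (lapB W δ) (lam1 : ℂ) ∧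
      (∀ μ : ℂ, IsEigenvalue (lapB W δ) μ → lam1 ≤ μ.re) ∧
      Polynomial.rootMultiplicity (lam1 : ℂ)
        (((lapB W δ).map (algebraMap ℝ ℂ)).charpoly) = 1 ∧
      ∃ v : Fin n → ℝ, (∀ i, 0 < v i) ∧ lapB W δ *ᵥ v = lam1 • v := by
  classical
  have hnz : Nonempty (Fin n) := by
    obtain ⟨i, _⟩ := Function.ne_iff.1 hδne
    exact ⟨i⟩
  set B := lapB W δ with hB
  have hBoff : ∀ i j, i ≠ j → B i j = - W i j := by
    intro i j hij
    simp [hB, lapB, degMat, Matrix.diagonal_apply_ne _ hij]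
  have hB1 : B *ᵥ (fun _ => (1 : ℝ)) = δ := by
    ext i
    simp only [hB, lapB, degMat, Matrix.add_mulVec, Matrix.sub_mulVec, Pi.add_apply, Pi.sub_apply,
      Matrix.mulVec_diagonal]
    simp [Matrix.mulVec, dotProduct]
  let c : ℝ := 1 + ∑ i, |B i i|
  let A : Matrix (Fin n) (Fin n) ℝ := c • (1 : Matrix (Fin n) (Fin n) ℝ) - B
  have hAd : ∀ i, 0 < A i i := by
    intro i
    have : |B i i| ≤ ∑ i, |B i i| :=
      Finset.single_le_sum (f := fun i => |B i i|) (fun _ _ => abs_nonneg _) (Finset.mem_univ i)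
    have h2 := le_abs_self (B i i)
    simp [A, c]
    linarith
  have hAoff : ∀ i j, i ≠ j → A i j = W i j := by
    intro i j hij
    simp [A, hBoff i j hij, Matrix.one_apply_ne hij]
  have hA : ∀ i j, 0 ≤ A i j := by
    intro i j
    rcases eq_or_ne i j with rfl | h
    · exact (hAd i).le
    · rw [hAoff i j h]; exact hWnonneg i j
  obtain ⟨M, hM⟩ := aux_primitive A hA hAd (fun i j => by
    refine Relation.ReflTransGen.mono ?_ _ _ (hconn i j)
    intro a b hab
    rcases eq_or_ne a b with rfl | h
    · exact hAd a
    · rw [hAoff a b h]; exact hab)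
  have hBA : ∀ x : Fin n → ℝ, A *ᵥ x = c • x - B *ᵥ x := by
    intro x
    simp only [A, Matrix.sub_mulVec, Matrix.smul_mulVec, Matrix.one_mulVec]
  obtain ⟨r, v, hv, hAv⟩ := aux_perron A hA M hM
  obtain ⟨r', u, hu, hAu⟩ := aux_perron Aᵀ (fun i j => hA j i) M (fun i j => by
    rw [← Matrix.transpose_pow]; exact hM j i)
  rw [Matrix.mulVec_transpose] at hAu
  have huA : ∀ x : Fin n → ℝ, u ⬝ᵥ (A *ᵥ x) = r' * (u ⬝ᵥ x) := by
    intro x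
    rw [Matrix.dotProduct_mulVec, hAu, smul_dotProduct, smul_eq_mul]
  have huv : ∀ x : Fin n → ℝ, (∀ i, 0 ≤ x i) → x ≠ 0 → 0 < u ⬝ᵥ x := by
    intro x hx hne
    obtain ⟨j, hj⟩ := Function.ne_iff.1 hne
    exact Finset.sum_pos' (fun k _ => mul_nonneg (hu k).le (hx k))
      ⟨j, Finset.mem_univ _, mul_pos (hu j) (lt_of_le_of_ne (hx j) (Ne.symm hj))⟩
  have hv0 : v ≠ 0 := by
    obtain ⟨i⟩ := hnz
    intro h
    have := hv i
    simp [h] at this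
  have huvpos := huv v (fun i => (hv i).le) hv0
  have hrr : r' = r := by
    have h := huA v
    rw [hAv, dotProduct_smul, smul_eq_mul] at h
    exact (mul_right_cancel₀ huvpos.ne' h).symm
  subst hrr
  have hBv : B *ᵥ v = (c - r') • v := by
    have := hBA v
    rw [hAv] at this
    rw [sub_smul, this]; abel
  have huB : ∀ x : Fin n → ℝ, u ⬝ᵥ (B *ᵥ x) = (c - r') * (u ⬝ᵥ x) := by
    intro x
    have h := huA x
    rw [hBA, dotProduct_sub, dotProduct_smul, smul_eq_mul] at h
    linarith
  have hlam : 0 < c - r' := by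
    have h := huB (fun _ => 1)
    rw [hB1] at h
    have h1 := huv δ hδnonneg hδne
    have h2 := huv (fun _ => 1) (fun _ => zero_le_one) (by
      obtain ⟨i⟩ := hnz
      intro h; have := congrFun h i; simp at this)
    rw [h] at h1
    exact pos_of_mul_pos_left h1 h2.le
  have hBre : ∀ (w : Fin n → ℂ) i, ((B.map (algebraMap ℝ ℂ)) *ᵥ w) i =
      ⟨(B *ᵥ (fun j => (w j).re)) i, (B *ᵥ (fun j => (w j).im)) i⟩ := by
    intro w i
    apply Complex.ext <;> simp [Matrix.mulVec, dotProduct]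
  have hev : ∀ μ : ℂ, IsEigenvalue B μ ↔
      ∃ x : Fin n → ℂ, x ≠ 0 ∧ (B.map (algebraMap ℝ ℂ)) *ᵥ x = μ • x := by
    intro μ
    rw [IsEigenvalue, Polynomial.IsRoot, Matrix.eval_charpoly, ← Matrix.exists_mulVec_eq_zero_iff]
    refine exists_congr fun x => and_congr_right fun _ => ?_
    rw [Matrix.sub_mulVec, sub_eq_zero, eq_comm]
    simp [← Matrix.smul_one_eq_diagonal, Matrix.smul_mulVec]
  let vc : Fin n → ℂ := fun i => (v i : ℂ)
  have hvc0 : vc ≠ 0 := by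
    intro h
    apply hv0
    ext i
    have := congrFun h i
    simpa [vc] using this
  have hBvc : (B.map (algebraMap ℝ ℂ)) *ᵥ vc = ((c - r' : ℝ) : ℂ) • vc := by
    ext i
    rw [hBre]
    have h0 : B *ᵥ (fun _ => (0 : ℝ)) = 0 := Matrix.mulVec_zero B
    apply Complex.ext <;> simp [vc, hBv, h0]
  have hmin : ∀ μ : ℂ, IsEigenvalue B μ → c - r' ≤ μ.re := by
    intro μ hμ
    obtain ⟨x, hx0, hx⟩ := (hev μ).1 hμ
    have key : ∀ i, ‖(c : ℂ) - μ‖ * ‖x i‖ ≤ (A *ᵥ (fun j => ‖x j‖)) i := by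
      intro i
      have h1 : ((c : ℂ) - μ) * x i = ∑ j, (A i j : ℂ) * x j := by
        have h2 := congrFun hx i
        simp only [Matrix.mulVec, dotProduct, Matrix.map_apply, Pi.smul_apply, smul_eq_mul,
          Complex.coe_algebraMap] at h2
        rw [sub_mul, ← h2]
        simp only [A, Matrix.sub_apply, Matrix.smul_apply, Matrix.one_apply, smul_eq_mul,
          Complex.ofReal_sub, sub_mul, Finset.sum_sub_distrib]
        congr 1
        rw [Finset.sum_eq_single i]
        · simp
        · intro j _ hj
          simp [hj.symm]
        · simp
      rw [← norm_mul, h1]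
      refine (norm_sum_le _ _).trans (Finset.sum_le_sum fun j _ => ?_)
      rw [norm_mul, Complex.norm_real, Real.norm_of_nonneg (hA i j)]
    have hpos := huv (fun j => ‖x j‖) (fun j => norm_nonneg _) (by
      intro h; apply hx0; ext j; simpa using congrFun h j)
    have h3 : ‖(c : ℂ) - μ‖ * (u ⬝ᵥ fun j => ‖x j‖) ≤ r' * (u ⬝ᵥ fun j => ‖x j‖) := by
      rw [← huA, ← smul_eq_mul, ← dotProduct_smul]
      exact Finset.sum_le_sum fun i _ => mul_le_mul_of_nonneg_left (key i) (hu i).le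
    have h4 := le_of_mul_le_mul_right h3 hpos
    have h5 := Complex.re_le_norm ((c : ℂ) - μ)
    simp at h5
    linarith
  refine ⟨fun μ hμ => hlam.trans_le (hmin μ hμ), c - r', (hev _).2 ⟨vc, hvc0, hBvc⟩, hmin, ?_,
    v, hv, hBv⟩
  have hker : ∀ w : Fin n → ℂ, (B.map (algebraMap ℝ ℂ)) *ᵥ w = ((c - r' : ℝ) : ℂ) • w →
      w ∈ Submodule.span ℂ {vc} := by
    intro w hw
    have hre : A *ᵥ (fun j => (w j).re) = r' • (fun j => (w j).re) := by
      ext i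
      have h1 := congrArg Complex.re (congrFun hw i)
      rw [hBre] at h1
      simp only [Pi.smul_apply, smul_eq_mul, Complex.re_ofReal_mul] at h1
      rw [hBA, Pi.sub_apply, h1]
      simp only [Pi.smul_apply, smul_eq_mul]
      ring
    have him : A *ᵥ (fun j => (w j).im) = r' • (fun j => (w j).im) := by
      ext i
      have h1 := congrArg Complex.im (congrFun hw i)
      rw [hBre] at h1
      simp only [Pi.smul_apply, smul_eq_mul, Complex.im_ofReal_mul] at h1
      rw [hBA, Pi.sub_apply, h1]
      simp only [Pi.smul_apply, smul_eq_mul]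
      ring
    obtain ⟨s, hs⟩ := aux_unique A M hM r' v hv hAv _ hre
    obtain ⟨t, ht⟩ := aux_unique A M hM r' v hv hAv _ him
    refine Submodule.mem_span_singleton.2 ⟨⟨s, t⟩, ?_⟩
    ext i
    have h1 := congrFun hs i
    have h2 := congrFun ht i
    apply Complex.ext
    · simpa [vc] using h1.symm
    · simpa [vc] using h2.symm
  have huBc : ∀ w : Fin n → ℂ, (fun i => (u i : ℂ)) ⬝ᵥ
      ((B.map (algebraMap ℝ ℂ)) *ᵥ w - ((c - r' : ℝ) : ℂ) • w) = 0 := by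
    intro w
    have h1 := huB (fun j => (w j).re)
    have h2 := huB (fun j => (w j).im)
    rw [dotProduct_sub, dotProduct_smul, sub_eq_zero]
    simp only [dotProduct, hBre] at h1 h2 ⊢
    apply Complex.ext
    · simpa using h1
    · simpa using h2
  have hgen : Module.End.maxGenEigenspace (Matrix.toLin' (B.map (algebraMap ℝ ℂ)))
      ((c - r' : ℝ) : ℂ) = Submodule.span ℂ {vc} := by
    apply le_antisymm
    · intro w hw
      obtain ⟨k, hk⟩ := (Module.End.mem_maxGenEigenspace _ _ _).1 hw
      clear hw
      induction k generalizing w with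
      | zero =>
        simp at hk
        rw [hk]; exact Submodule.zero_mem _
      | succ k ih =>
        rw [pow_succ, Module.End.mul_apply] at hk
        have h1 := ih hk
        obtain ⟨a, ha⟩ := Submodule.mem_span_singleton.1 h1
        have h2 := huBc w
        simp only [LinearMap.sub_apply, LinearMap.smul_apply, Module.End.one_apply,
          Matrix.toLin'_apply] at ha
        rw [← ha, dotProduct_smul, smul_eq_mul] at h2
        have h3 : (fun i => (u i : ℂ)) ⬝ᵥ vc = ((u ⬝ᵥ v : ℝ) : ℂ) := by
          simp [dotProduct, vc]
        rw [h3] at h2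
        have h4 : a = 0 := by
          rcases mul_eq_zero.1 h2 with h | h
          · exact h
          · exact absurd (Complex.ofReal_eq_zero.1 h) huvpos.ne'
        rw [h4, zero_smul] at ha
        exact hker w (sub_eq_zero.1 ha.symm)
    · rw [Submodule.span_singleton_le_iff_mem, Module.End.mem_maxGenEigenspace]
      refine ⟨1, ?_⟩
      rw [pow_one, LinearMap.sub_apply, Matrix.toLin'_apply, hBvc]
      simp
  rw [← Matrix.charpoly_toLin', ← LinearMap.finrank_maxGenEigenspace_eq, hgen,
    finrank_span_singleton hvc0]
end

section
/- In the FSN network Ḡ of G, every node is reachable from the leader set: for every node i ∈ V there exist a leader l (i.e., δ_l > 0) and a finite sequence of nodes i = i₀, i₁, …, i_p = l such that w̄_{i_k i_{k+1}} > 0 for every k (each node in the path follows one of its retained in-neighbors). -/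
open Matrix Polynomial

/-- The FSN ("following the slower neighbor") adjacency matrix:
`w̄_ij = w_ij` if `v_i > v_j`, and `w̄_ij = 0` otherwise. -/
noncomputable def fsn {n : ℕ} (W : Matrix (Fin n) (Fin n) ℝ) (v : Fin n → ℝ) :
    Matrix (Fin n) (Fin n) ℝ :=
  Matrix.of fun i j => if v j < v i then W i j else 0

/-- In the FSN network of `G`, every node is reachable from the leader
set: for every node `i` there is a leader `l` (`δ l > 0`) and a directed path
`i = i₀, i₁, …, i_p = l` with `w̄_{i_k i_{k+1}} > 0` for every `k`. -/
theorem fsn_reachable_from_leaders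
    {n : ℕ} (W : Matrix (Fin n) (Fin n) ℝ)
    (hWnonneg : ∀ i j, 0 ≤ W i j)
    (hconn : StronglyConnected W)
    (δ : Fin n → ℝ) (hδnonneg : ∀ i, 0 ≤ δ i) (hδne : δ ≠ 0)
    (lam1 : ℝ) (hlam1 : 0 < lam1)
    (v : Fin n → ℝ) (hv : ∀ i, 0 < v i)
    (hveig : lapB W δ *ᵥ v = lam1 • v) :
    ∀ i : Fin n, ∃ l : Fin n, 0 < δ l ∧
      Relation.ReflTransGen (fun a b => 0 < fsn W v a b) i l := by
  have key : ∀ i, δ i = 0 → ∃ j, v j < v i ∧ 0 < W i j := by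
    intro i hi
    have h := congrFun hveig i
    simp only [lapB, degMat, Matrix.add_mulVec, Matrix.sub_mulVec, Pi.add_apply, Pi.sub_apply,
      Matrix.mulVec_diagonal, Pi.smul_apply, smul_eq_mul, hi, zero_mul, add_zero] at h
    have h2 : ∑ j, W i j * (v i - v j) = lam1 * v i := by
      rw [← h]
      simp only [Matrix.mulVec, dotProduct, mul_sub, Finset.sum_sub_distrib, Finset.sum_mul]
    have h3 : 0 < ∑ j, W i j * (v i - v j) := by
      rw [h2]
      exact mul_pos hlam1 (hv i)
    obtain ⟨j, -, hj⟩ := Finset.exists_lt_of_sum_lt (s := Finset.univ) (f := fun _ => (0 : ℝ))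
      (g := fun j => W i j * (v i - v j)) (by simpa using h3)
    have hW : 0 < W i j := by
      rcases (hWnonneg i j).lt_or_eq with h | h
      · exact h
      · simp [← h] at hj
    exact ⟨j, sub_pos.mp ((mul_pos_iff_of_pos_left hW).mp hj), hW⟩
  have wf : WellFounded (fun a b : Fin n => v a < v b) :=
    haveI : IsTrans (Fin n) (fun a b : Fin n => v a < v b) := ⟨fun _ _ _ h1 h2 => h1.trans h2⟩
    haveI : Std.Irrefl (fun a b : Fin n => v a < v b) := ⟨fun _ => lt_irrefl _⟩
    Finite.wellFounded_of_trans_of_irrefl _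
  intro i
  induction i using wf.induction with
  | _ i ih =>
    rcases (hδnonneg i).lt_or_eq with h | h
    · exact ⟨i, h, Relation.ReflTransGen.refl⟩
    · obtain ⟨j, hj, hW⟩ := key i h.symm
      obtain ⟨l, hl, hp⟩ := ih j hj
      refine ⟨l, hl, Relation.ReflTransGen.head ?_ hp⟩
      simpa [fsn, hj] using hW
end

section
/- If the follower set is nonempty, i.e., δ_i = 0 for at least one node i, then there exists at least one edge (i,j) ∈ E (that is, w_ij > 0) such that v_j > v_i. -/
open Matrix Polynomial

/-- If the follower set is nonempty (some `δ i = 0`), then there exists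
an edge `(i, j) ∈ E` (i.e. `w_ij > 0`) with `v_j > v_i`. -/
theorem exists_increasing_edge_of_follower
    {n : ℕ} (W : Matrix (Fin n) (Fin n) ℝ)
    (hWnonneg : ∀ i j, 0 ≤ W i j)
    (hconn : StronglyConnected W)
    (δ : Fin n → ℝ) (hδnonneg : ∀ i, 0 ≤ δ i) (hδne : δ ≠ 0)
    (lam1 : ℝ) (hlam1 : 0 < lam1)
    (v : Fin n → ℝ) (hv : ∀ i, 0 < v i)
    (hveig : lapB W δ *ᵥ v = lam1 • v)
    (hfollower : ∃ i, δ i = 0) :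
    ∃ i j : Fin n, 0 < W i j ∧ v i < v j := by
  by_contra hcon
  push Not at hcon
  obtain ⟨i, hi⟩ := hfollower
  have mono : ∀ a b : Fin n, v b ≤ v a := by
    intro a b
    induction hconn a b with
    | refl => exact le_refl _
    | tail _ h ih => exact (hcon _ _ h).trans ih
  have h := congrFun hveig i
  simp only [lapB, degMat, Matrix.add_mulVec, Matrix.sub_mulVec, Pi.add_apply, Pi.sub_apply,
    Matrix.mulVec_diagonal, hi, Pi.smul_apply, smul_eq_mul, zero_mul, add_zero] at h
  have h2 : (W *ᵥ v) i = (∑ j, W i j) * v i := by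
    rw [Finset.sum_mul]
    simp only [Matrix.mulVec, dotProduct]
    exact Finset.sum_congr rfl fun j _ => by rw [le_antisymm (mono i j) (mono j i)]
  have := mul_pos hlam1 (hv i)
  linarith
end

section
/- Every node i with δ_i = 0 (every follower) retains at least one in-neighbor in the FSN network: there exists j with w_ij > 0 and v_j < v_i. -/
open Matrix Polynomial

/-- Every follower (node `i` with `δ i = 0`) retains at least one
in-neighbor in the FSN network: there is `j` with `w_ij > 0` and `v_j < v_i`. -/
theorem follower_retains_inneighbor
    {n : ℕ} (W : Matrix (Fin n) (Fin n) ℝ)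
    (hWnonneg : ∀ i j, 0 ≤ W i j)
    (hconn : StronglyConnected W)
    (δ : Fin n → ℝ) (hδnonneg : ∀ i, 0 ≤ δ i) (hδne : δ ≠ 0)
    (lam1 : ℝ) (hlam1 : 0 < lam1)
    (v : Fin n → ℝ) (hv : ∀ i, 0 < v i)
    (hveig : lapB W δ *ᵥ v = lam1 • v) :
    ∀ i : Fin n, δ i = 0 → ∃ j : Fin n, 0 < W i j ∧ v j < v i := by
  intro i hi
  by_contra hcon
  push Not at hcon
  have h := congrFun hveig i
  simp only [lapB, degMat, Matrix.add_mulVec, Matrix.sub_mulVec, Pi.add_apply, Pi.sub_apply,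
    Matrix.mulVec_diagonal, Pi.smul_apply, smul_eq_mul, hi, zero_mul, add_zero] at h
  have hle : (∑ j, W i j) * v i ≤ (W *ᵥ v) i := by
    simp only [Matrix.mulVec, dotProduct, Finset.sum_mul]
    refine Finset.sum_le_sum fun j _ => ?_
    rcases (hWnonneg i j).eq_or_lt with h0 | h0
    · simp [← h0]
    · exact mul_le_mul_of_nonneg_left (hcon j h0) h0.le
  have := mul_pos hlam1 (hv i)
  linarith
end

section
/- In the FSN network Ḡ of G defined from the Perron eigenvector of P, every node is reachable from the leader set: for every node i ∈ V there exist a leader l (i.e., δ_l > 0) and a finite sequence of nodes i = i₀, i₁, …, i_p = l such that w̄_{i_k i_{k+1}} > 0 for every k. -/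
open Matrix Polynomial

/-- The perturbed stochastic matrix `P = (D + diag(δ))⁻¹ W`. -/
noncomputable def Pmat {n : ℕ} (W : Matrix (Fin n) (Fin n) ℝ) (δ : Fin n → ℝ) :
    Matrix (Fin n) (Fin n) ℝ :=
  (degMat W + Matrix.diagonal δ)⁻¹ * W

/-- In the FSN network obtained from the Perron eigenvector of `P`,
every node is reachable from the leader set. -/
theorem fsn_reachable_from_leaders_dlfn
    {n : ℕ} (W : Matrix (Fin n) (Fin n) ℝ)
    (hWnonneg : ∀ i j, 0 ≤ W i j) (hWdiag : ∀ i, 0 < W i i)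
    (hconn : StronglyConnected W)
    (δ : Fin n → ℝ) (hδnonneg : ∀ i, 0 ≤ δ i) (hδne : δ ≠ 0)
    (lamn : ℝ) (hlamn : lamn < 1)
    (v : Fin n → ℝ) (hv : ∀ i, 0 < v i)
    (hveig : Pmat W δ *ᵥ v = lamn • v) :
    ∀ i : Fin n, ∃ l : Fin n, 0 < δ l ∧
      Relation.ReflTransGen (fun a b => 0 < fsn W v a b) i l := by
  have hd : ∀ i, 0 < ∑ j, W i j := fun i =>
    Finset.sum_pos' (fun j _ => hWnonneg i j) ⟨i, Finset.mem_univ i, hWdiag i⟩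
  have hM : degMat W + Matrix.diagonal δ
      = Matrix.diagonal (fun i => (∑ j, W i j) + δ i) := by
    rw [degMat, Matrix.diagonal_add]
  have hdet : IsUnit (degMat W + Matrix.diagonal δ).det := by
    rw [hM, Matrix.det_diagonal, isUnit_iff_ne_zero]
    exact Finset.prod_ne_zero_iff.mpr
      (fun i _ => ne_of_gt (add_pos_of_pos_of_nonneg (hd i) (hδnonneg i)))
  have hWv : W *ᵥ v = (degMat W + Matrix.diagonal δ) *ᵥ (lamn • v) := by
    rw [← hveig, Pmat, Matrix.mulVec_mulVec, ← Matrix.mul_assoc,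
      Matrix.mul_nonsing_inv _ hdet, Matrix.one_mul]
  have key : ∀ i, δ i = 0 → ∃ j, 0 < fsn W v i j ∧ v j < v i := by
    intro i hi
    have h1 := congrFun hWv i
    rw [hM, Matrix.mulVec_diagonal, hi] at h1
    simp only [Matrix.mulVec, dotProduct, Pi.smul_apply, smul_eq_mul, add_zero] at h1
    have h2 : ∑ j, W i j * v j < ∑ j, W i j * v i := by
      rw [h1, ← Finset.sum_mul]
      have := mul_pos (hd i) (hv i)
      nlinarith
    obtain ⟨j, -, hj⟩ := Finset.exists_lt_of_sum_lt h2
    have hvj : v j < v i := lt_of_mul_lt_mul_left hj (hWnonneg i j)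
    have hw : 0 < W i j := by
      refine lt_of_le_of_ne (hWnonneg i j) (fun h => ?_)
      rw [← h] at hj
      simp at hj
    exact ⟨j, by simpa [fsn, hvj] using hw, hvj⟩
  intro i
  have wf : WellFounded (fun a b : Fin n => v a < v b) :=
    @Finite.wellFounded_of_trans_of_irrefl _ _ _
      ⟨fun _ _ _ h1 h2 => lt_trans h1 h2⟩ ⟨fun _ => lt_irrefl _⟩
  induction i using wf.induction with
  | _ i ih =>
    rcases (hδnonneg i).lt_or_eq with h | h
    · exact ⟨i, h, Relation.ReflTransGen.refl⟩
    · obtain ⟨j, hj, hlt⟩ := key i h.symm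
      obtain ⟨l, hl, hr⟩ := ih j hlt
      exact ⟨l, hl, Relation.ReflTransGen.head hj hr⟩
end

section
/- If the follower set is nonempty, i.e., δ_i = 0 for at least one node i, then there exists at least one edge (i,j) ∈ E (that is, w_ij > 0) such that v_j > v_i. -/
open Matrix Polynomial

/-- If the follower set is nonempty (some `δ i = 0`), then there exists
an edge `(i, j) ∈ E` (i.e. `w_ij > 0`) with `v_j > v_i`. -/
theorem exists_increasing_edge_of_follower_dlfn
    {n : ℕ} (W : Matrix (Fin n) (Fin n) ℝ)
    (hWnonneg : ∀ i j, 0 ≤ W i j) (hWdiag : ∀ i, 0 < W i i)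
    (hconn : StronglyConnected W)
    (δ : Fin n → ℝ) (hδnonneg : ∀ i, 0 ≤ δ i) (hδne : δ ≠ 0)
    (lamn : ℝ) (hlamn : lamn < 1)
    (v : Fin n → ℝ) (hv : ∀ i, 0 < v i)
    (hveig : Pmat W δ *ᵥ v = lamn • v)
    (hfollower : ∃ i, δ i = 0) :
    ∃ i j : Fin n, 0 < W i j ∧ v i < v j := by
  by_contra hcon
  push Not at hcon
  have hmono : ∀ i j : Fin n, v j ≤ v i := by
    intro i j
    have h := hconn i j
    induction h with
    | refl => exact le_refl _
    | tail _ hbc ih => exact (hcon _ _ hbc).trans ih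
  have hd : ∀ i, 0 < ∑ j, W i j := fun i =>
    (hWdiag i).trans_le
      (Finset.single_le_sum (f := fun j => W i j) (fun j _ => hWnonneg i j) (Finset.mem_univ i))
  have hM : degMat W + Matrix.diagonal δ = Matrix.diagonal (fun i => (∑ j, W i j) + δ i) := by
    simp [degMat, Matrix.diagonal_add]
  have hdet : IsUnit (degMat W + Matrix.diagonal δ).det := by
    rw [hM, Matrix.det_diagonal]
    refine isUnit_iff_ne_zero.mpr (Finset.prod_ne_zero_iff.mpr fun i _ => ?_)
    have h1 := hd i
    have h2 := hδnonneg i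
    positivity
  obtain ⟨i, hi⟩ := hfollower
  have h := congrArg (fun x => (degMat W + Matrix.diagonal δ) *ᵥ x) hveig
  simp only [Pmat, Matrix.mulVec_mulVec, Matrix.mul_nonsing_inv_cancel_left _ _ hdet] at h
  rw [hM] at h
  have h' := congrFun h i
  rw [Matrix.mulVec_diagonal] at h'
  have hc : (W *ᵥ v) i = (∑ j, W i j) * v i := by
    simp only [Matrix.mulVec, dotProduct, Finset.sum_mul]
    exact Finset.sum_congr rfl fun j _ => by rw [le_antisymm (hmono i j) (hmono j i)]
  rw [hc, hi, Pi.smul_apply, smul_eq_mul] at h'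
  have hp := mul_pos (hd i) (hv i)
  nlinarith
end

section
/- Every node i with δ_i = 0 (every follower) retains at least one in-neighbor other than itself in the FSN network: there exists j ≠ i with w_ij > 0 and v_j < v_i. -/
open Matrix Polynomial

/-- Every follower (node `i` with `δ i = 0`) retains at least one
in-neighbor other than itself in the FSN network: there is `j ≠ i` with `w_ij > 0`
and `v_j < v_i`. -/
theorem follower_retains_inneighbor_dlfn
    {n : ℕ} (W : Matrix (Fin n) (Fin n) ℝ)
    (hWnonneg : ∀ i j, 0 ≤ W i j) (hWdiag : ∀ i, 0 < W i i)
    (hconn : StronglyConnected W)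
    (δ : Fin n → ℝ) (hδnonneg : ∀ i, 0 ≤ δ i) (hδne : δ ≠ 0)
    (lamn : ℝ) (hlamn : lamn < 1)
    (v : Fin n → ℝ) (hv : ∀ i, 0 < v i)
    (hveig : Pmat W δ *ᵥ v = lamn • v) :
    ∀ i : Fin n, δ i = 0 → ∃ j : Fin n, j ≠ i ∧ 0 < W i j ∧ v j < v i := by
  intro i hi
  by_contra! hcon
  have hd : ∀ k, 0 < ∑ j, W k j + δ k := fun k =>
    add_pos_of_pos_of_nonneg
      (Finset.sum_pos' (fun j _ => hWnonneg k j) ⟨k, Finset.mem_univ k, hWdiag k⟩) (hδnonneg k)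
  have hM : degMat W + Matrix.diagonal δ = Matrix.diagonal (fun k => ∑ j, W k j + δ k) := by
    simp [degMat, Matrix.diagonal_add]
  have hu : IsUnit (degMat W + Matrix.diagonal δ).det := by
    rw [hM, Matrix.det_diagonal]
    exact (Finset.prod_pos fun k _ => hd k).ne'.isUnit
  have h1 : W *ᵥ v = (degMat W + Matrix.diagonal δ) *ᵥ (lamn • v) := by
    rw [← hveig, Pmat, Matrix.mulVec_mulVec, ← Matrix.mul_assoc, Matrix.mul_nonsing_inv _ hu,
      Matrix.one_mul]
  have h2 := congrFun h1 i
  rw [hM, Matrix.mulVec_diagonal] at h2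
  simp only [Matrix.mulVec, dotProduct, Pi.smul_apply, smul_eq_mul, hi, add_zero] at h2
  have h3 : ∑ j, W i j * v i ≤ ∑ j, W i j * v j := by
    refine Finset.sum_le_sum fun j _ => ?_
    by_cases hji : j = i
    · rw [hji]
    rcases (hWnonneg i j).eq_or_lt with h | h
    · simp [← h]
    · exact mul_le_mul_of_nonneg_left (hcon j hji h) h.le
  rw [← Finset.sum_mul, h2] at h3
  have h4 := hd i
  rw [hi, add_zero] at h4
  have h5 := le_of_mul_le_mul_left h3 h4
  nlinarith [hv i]
end

section
/- Suppose there is exactly one leader l (δ_l > 0 and δ_i = 0 for all i ≠ l). Then the leader's FSN neighbor set is empty, every follower's FSN neighbor set is nonempty, and for every choice function σ assigning to each follower i one retained in-neighbor σ(i) with w̄_{i σ(i)} > 0, the graph T on V with edge set {(i, σ(i)) : i ≠ l} is a directed spanning tree with the leader l as its unique root: for every node i, iterating σ starting from i reaches l in finitely many steps, and l is the only node with no outgoing edge in T. -/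
open Matrix Polynomial Function

/-- With exactly one leader `l`, the leader's FSN neighbor set is
empty, every follower's FSN neighbor set is nonempty, and for every choice function `σ`
selecting for each follower a retained in-neighbor, the graph `T` with edge set
`{(i, σ i) : i ≠ l}` is a directed spanning tree rooted at `l`: iterating `σ` from any
node reaches `l` in finitely many steps, and `l` is the only node without an outgoing
edge in `T`. -/
theorem fsn_single_leader_spanning_tree
    {n : ℕ} (W : Matrix (Fin n) (Fin n) ℝ)
    (hWnonneg : ∀ i j, 0 ≤ W i j)
    (hconn : StronglyConnected W)
    (δ : Fin n → ℝ) (hδnonneg : ∀ i, 0 ≤ δ i)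
    (lam1 : ℝ) (hlam1 : 0 < lam1)
    (v : Fin n → ℝ) (hv : ∀ i, 0 < v i)
    (hveig : lapB W δ *ᵥ v = lam1 • v)
    (l : Fin n) (hl : 0 < δ l) (hfol : ∀ i, i ≠ l → δ i = 0) :
    (∀ j, fsn W v l j = 0) ∧
    (∀ i, i ≠ l → ∃ j, 0 < fsn W v i j) ∧
    (∀ σ : Fin n → Fin n, (∀ i, i ≠ l → 0 < fsn W v i (σ i)) →
      (∀ i : Fin n, ∃ p : ℕ, σ^[p] i = l) ∧
      (∀ j : Fin n, (∀ b : Fin n, ¬(j ≠ l ∧ b = σ j)) ↔ j = l)) := by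
  have key : ∀ i, i ≠ l → ∃ j, 0 < W i j ∧ v j < v i := by
    intro i hi
    have h := congrFun hveig i
    have h2 : ∑ j, W i j * (v i - v j) = lam1 * v i := by
      simp only [lapB, degMat, Matrix.add_mulVec, Matrix.sub_mulVec, Pi.add_apply, Pi.sub_apply,
        Matrix.mulVec_diagonal, hfol i hi, Pi.smul_apply, smul_eq_mul, zero_mul, add_zero] at h
      rw [← h]
      simp only [mul_sub, Finset.sum_sub_distrib, Finset.sum_mul, Matrix.mulVec, dotProduct]
    have h3 : 0 < ∑ j, W i j * (v i - v j) := h2 ▸ mul_pos hlam1 (hv i)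
    obtain ⟨j, -, hj⟩ := Finset.exists_lt_of_sum_lt (s := Finset.univ) (f := fun _ => (0 : ℝ))
      (g := fun j => W i j * (v i - v j)) (by simpa using h3)
    have hj' : 0 < W i j * (v i - v j) := hj
    have hlt : 0 < v i - v j := pos_of_mul_pos_right hj' (hWnonneg i j)
    exact ⟨j, pos_of_mul_pos_left hj' hlt.le, by linarith⟩
  have wf : WellFounded (fun a b : Fin n => v a < v b) :=
    haveI : IsTrans (Fin n) (fun a b => v a < v b) := ⟨fun _ _ _ h h' => lt_trans h h'⟩
    haveI : Std.Irrefl (fun a b : Fin n => v a < v b) := ⟨fun _ => lt_irrefl _⟩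
    Finite.wellFounded_of_trans_of_irrefl _
  have hmin : ∀ j, v l ≤ v j := by
    intro j
    induction j using wf.induction with
    | _ j ih =>
      by_cases hj : j = l
      · rw [hj]
      · obtain ⟨k, -, hk⟩ := key j hj
        exact (ih k hk).trans hk.le
  refine ⟨fun j => ?_, fun i hi => ?_, fun σ hσ => ⟨fun i => ?_, fun j => ?_⟩⟩
  · simp [fsn, not_lt.mpr (hmin j)]
  · obtain ⟨j, h1, h2⟩ := key i hi
    exact ⟨j, by simp [fsn, h1, h2]⟩
  · induction i using wf.induction with
    | _ i ih =>
      by_cases hi : i = l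
      · exact ⟨0, hi⟩
      · have h := hσ i hi
        have hlt : v (σ i) < v i := by
          by_contra hc
          simp [fsn, hc] at h
        obtain ⟨p, hp⟩ := ih _ hlt
        exact ⟨p + 1, hp⟩
  · constructor
    · intro h
      by_contra hj
      exact h _ ⟨hj, rfl⟩
    · rintro rfl b ⟨h, -⟩
      exact h rfl
end

section
/- For the augmented directed graph Ĝ on n+1 nodes obtained by adjoining an input node u to G with weight matrix Ŵ = [[W, δ],[0, 0]], the augmented Laplacian L̂ = [[L_B, −δ],[0, 0]] has the property that every eigenvalue of L_B is an eigenvalue of L̂; in particular, since Ĝ has a directed spanning tree rooted at u, L̂ has a simple zero eigenvalue and all its other eigenvalues have positive real part, so every eigenvalue of L_B has positive real part. -/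
open Matrix Polynomial

/-- `μ : ℂ` is an eigenvalue of a real square matrix. -/
def IsEigOf {m : Type*} [Fintype m] [DecidableEq m]
    (M : Matrix m m ℝ) (μ : ℂ) : Prop :=
  ((M.map (algebraMap ℝ ℂ)).charpoly).IsRoot μ

/-- The adjacency matrix `Ŵ = [[W, δ], [0, 0]]` of the augmented graph `Ĝ` obtained by
adjoining the input node `u` to `G`. -/
def What {n : ℕ} (W : Matrix (Fin n) (Fin n) ℝ) (δ : Fin n → ℝ) :
    Matrix (Fin n ⊕ Fin 1) (Fin n ⊕ Fin 1) ℝ :=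
  Matrix.fromBlocks W (Matrix.of fun i (_ : Fin 1) => δ i) 0 0

/-- The augmented Laplacian `L̂ = [[L_B, -δ], [0, 0]]`. -/
def Lhat {n : ℕ} (W : Matrix (Fin n) (Fin n) ℝ) (δ : Fin n → ℝ) :
    Matrix (Fin n ⊕ Fin 1) (Fin n ⊕ Fin 1) ℝ :=
  Matrix.fromBlocks (lapB W δ) (-(Matrix.of fun i (_ : Fin 1) => δ i)) 0 0

theorem lapB_eig_pos {n : ℕ} (W : Matrix (Fin n) (Fin n) ℝ)
    (hW : ∀ i j, 0 ≤ W i j)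
    (hconn : StronglyConnected W)
    (δ : Fin n → ℝ) (hδ : ∀ i, 0 ≤ δ i) (hδne : δ ≠ 0)
    (μ : ℂ) (h : IsEigOf (lapB W δ) μ) : 0 < μ.re := by
  by_contra hre
  push Not at hre
  unfold IsEigOf at h
  rw [Polynomial.IsRoot, Matrix.eval_charpoly] at h
  obtain ⟨v, hv0, hv⟩ := Matrix.exists_mulVec_eq_zero_iff.mpr h
  have heq : ∀ i, (((∑ j, W i j + δ i : ℝ) : ℂ) - μ) * v i = ∑ j, (W i j : ℂ) * v j := by
    intro i
    have h1 := congrFun hv i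
    have hM : (Matrix.scalar (Fin n) μ - (lapB W δ).map (algebraMap ℝ ℂ)) =
        Matrix.diagonal (fun i => μ - ((∑ j, W i j + δ i : ℝ) : ℂ)) + W.map (algebraMap ℝ ℂ) := by
      ext a b
      by_cases hab : a = b
      · subst hab
        simp [lapB, degMat]
        ring
      · simp [lapB, degMat, hab]
    rw [hM, Matrix.add_mulVec, Pi.add_apply, Matrix.mulVec_diagonal] at h1
    simp only [Matrix.mulVec, dotProduct, Matrix.map_apply, Pi.zero_apply,
      Complex.coe_algebraMap] at h1
    linear_combination -h1
  obtain ⟨k, hk⟩ := Function.ne_iff.mp hv0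
  obtain ⟨m, -, hm⟩ := Finset.exists_max_image Finset.univ (fun i => ‖v i‖) ⟨k, Finset.mem_univ k⟩
  have hpos : 0 < ‖v m‖ := lt_of_lt_of_le (norm_pos_iff.mpr hk) (hm k (Finset.mem_univ k))
  have key : ∀ i, ‖v i‖ = ‖v m‖ → δ i = 0 ∧ ∀ j, 0 < W i j → ‖v j‖ = ‖v m‖ := by
    intro i hi
    have h1 : (∑ j, W i j + δ i) * ‖v m‖ ≤ ∑ j, W i j * ‖v j‖ := by
      calc (∑ j, W i j + δ i) * ‖v m‖
          ≤ ‖((∑ j, W i j + δ i : ℝ) : ℂ) - μ‖ * ‖v m‖ := by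
            refine mul_le_mul_of_nonneg_right ?_ hpos.le
            refine le_trans ?_ (Complex.re_le_norm _)
            rw [Complex.sub_re, Complex.ofReal_re]
            linarith
        _ = ‖∑ j, (W i j : ℂ) * v j‖ := by rw [← heq i, norm_mul, hi]
        _ ≤ ∑ j, ‖(W i j : ℂ) * v j‖ := norm_sum_le _ _
        _ = ∑ j, W i j * ‖v j‖ := by
            refine Finset.sum_congr rfl fun j _ => ?_
            rw [norm_mul, Complex.norm_real, Real.norm_of_nonneg (hW i j)]
    have h2 : ∀ j ∈ Finset.univ, 0 ≤ W i j * (‖v m‖ - ‖v j‖) := fun j hj =>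
      mul_nonneg (hW i j) (sub_nonneg.mpr (hm j hj))
    have h3 : ∑ j, W i j * (‖v m‖ - ‖v j‖) = (∑ j, W i j) * ‖v m‖ - ∑ j, W i j * ‖v j‖ := by
      simp only [mul_sub, Finset.sum_sub_distrib, Finset.sum_mul]
    have h4 := Finset.sum_nonneg h2
    have h5 : 0 ≤ δ i * ‖v m‖ := mul_nonneg (hδ i) hpos.le
    have h6 : δ i * ‖v m‖ = 0 := by nlinarith
    have h7 : ∑ j, W i j * (‖v m‖ - ‖v j‖) = 0 := by nlinarith
    refine ⟨(mul_eq_zero.mp h6).resolve_right hpos.ne', fun j hj => ?_⟩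
    have h8 := (Finset.sum_eq_zero_iff_of_nonneg h2).mp h7 j (Finset.mem_univ j)
    have h9 := (mul_eq_zero.mp h8).resolve_left hj.ne'
    linarith
  have hall : ∀ j, ‖v j‖ = ‖v m‖ := by
    intro j
    induction hconn m j with
    | refl => rfl
    | tail _ hbc ih => exact (key _ ih).2 _ hbc
  exact hδne (funext fun i => (key i (hall i)).1)

theorem Lhat_charpoly {n : ℕ} (W : Matrix (Fin n) (Fin n) ℝ) (δ : Fin n → ℝ) :
    ((Lhat W δ).map (algebraMap ℝ ℂ)).charpoly =
      ((lapB W δ).map (algebraMap ℝ ℂ)).charpoly * X := by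
  unfold Lhat
  rw [Matrix.fromBlocks_map, Matrix.map_zero _ (map_zero _), Matrix.map_zero _ (map_zero _),
    Matrix.charpoly_fromBlocks_zero₂₁, Matrix.charpoly_zero]
  simp

/-- Every eigenvalue of `L_B` is an eigenvalue of the augmented
Laplacian `L̂`; the augmented graph `Ĝ` has a directed spanning tree rooted at the input
node `u`, `L̂` has a simple zero eigenvalue, all of its other eigenvalues have positive
real part, so every eigenvalue of `L_B` has positive real part. -/
theorem augmented_laplacian_spectrum
    {n : ℕ} (W : Matrix (Fin n) (Fin n) ℝ)
    (hWnonneg : ∀ i j, 0 ≤ W i j)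
    (hconn : StronglyConnected W)
    (δ : Fin n → ℝ) (hδnonneg : ∀ i, 0 ≤ δ i) (hδne : δ ≠ 0) :
    (∀ μ : ℂ, IsEigOf (lapB W δ) μ → IsEigOf (Lhat W δ) μ) ∧
    (∀ a : Fin n ⊕ Fin 1,
      Relation.ReflTransGen (fun p q => 0 < What W δ p q) a (Sum.inr 0)) ∧
    IsEigOf (Lhat W δ) 0 ∧
    Polynomial.rootMultiplicity (0 : ℂ)
      (((Lhat W δ).map (algebraMap ℝ ℂ)).charpoly) = 1 ∧
    (∀ μ : ℂ, IsEigOf (Lhat W δ) μ → μ ≠ 0 → 0 < μ.re) ∧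
    (∀ μ : ℂ, IsEigOf (lapB W δ) μ → 0 < μ.re) := by
  have hc := Lhat_charpoly W δ
  have hpos := lapB_eig_pos W hWnonneg hconn δ hδnonneg hδne
  refine ⟨?_, ?_, ?_, ?_, ?_, hpos⟩
  · intro μ h
    unfold IsEigOf at *
    rw [hc, Polynomial.IsRoot, Polynomial.eval_mul, h.eq_zero, zero_mul]
  · obtain ⟨k, hk⟩ := Function.ne_iff.mp hδne
    have hk' : 0 < δ k := lt_of_le_of_ne (hδnonneg k) (Ne.symm hk)
    rintro (a | a)
    · refine Relation.ReflTransGen.tail (b := Sum.inl k) ?_ (by simpa [What] using hk')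
      exact Relation.ReflTransGen.lift Sum.inl (fun x y hxy => by simpa [What, Function.onFun] using hxy) _ _
        (hconn a k)
    · rw [Subsingleton.elim a 0]
  · unfold IsEigOf
    rw [hc, Polynomial.IsRoot, Polynomial.eval_mul, Polynomial.eval_X, mul_zero]
  · have hne : ((lapB W δ).map (algebraMap ℝ ℂ)).charpoly ≠ 0 :=
      (Matrix.charpoly_monic _).ne_zero
    rw [hc, Polynomial.rootMultiplicity_mul (mul_ne_zero hne Polynomial.X_ne_zero),
      Polynomial.rootMultiplicity_eq_zero (fun h => by simpa using hpos 0 h)]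
    have := Polynomial.rootMultiplicity_X_sub_C_self (x := (0 : ℂ))
    simpa using this
  · intro μ h h0
    apply hpos
    unfold IsEigOf at *
    rw [hc, Polynomial.IsRoot, Polynomial.eval_mul, Polynomial.eval_X] at h
    exact (mul_eq_zero.mp h).resolve_right h0
end
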